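/- Let M be an alternal rational-function-valued mould in the variables v_i such that the mould M̌ defined by M̌(v_1,...,v_r) = v_1(v_1-v_2)⋯(v_{r-1}-v_r)v_r · M(v_1,...,v_r) is polynomial-valued in every depth. Then M̌(0, v_2, ..., v_r) = M̌(v_2, ..., v_r, 0) for every r ≥ 2. -/

import Mathlib

/-- A mould over ℚ: its depth-r component is its restriction to lists of length r
(a function of r commuting variables, identified with the corresponding ℚ-valued function). -/
abbrev Mould := List ℚ → ℚ

/-- The list of all shuffles of two lists. -/
def shuffles : List ℚ → List ℚ → List (List ℚ)
  | [], ys => [ys]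
  | x :: xs, [] => [x :: xs]
  | x :: xs, y :: ys =>
      ((shuffles xs (y :: ys)).map (x :: ·)) ++ ((shuffles (x :: xs) ys).map (y :: ·))

/-- Δ_v(v₁,…,v_r) = v₁(v₁-v₂)(v₂-v₃)⋯(v_{r-1}-v_r)v_r (equal to 1 in depth 0). -/
def deltaV (w : List ℚ) : ℚ :=
  w.headD 1 * w.getLastD 1 * (List.zipWith (fun a b => a - b) w w.tail).prod

/-- A generic point: pairwise distinct, nonzero coordinates (so that Δ_v is nonzero at the
point and at all its permutations); identities of rational functions are equivalent to their
pointwise validity at such points. -/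
def GoodV (w : List ℚ) : Prop := w.Nodup ∧ (0 : ℚ) ∉ w

/-- Evaluation of a family of polynomials (one in each depth) at a point, in the matching
depth: this encodes a polynomial-valued mould. -/
noncomputable def evalP (p : (r : ℕ) → MvPolynomial (Fin r) ℚ) (w : List ℚ) : ℚ :=
  MvPolynomial.aeval w.get (p w.length)

/-!
Let `v₁, …, v_n` be a generic word with `n ≥ 1`, and put `v₀ = v_{n+1} = 0`. Since
`Δ_v(v₁, …, v_n) = -∏ (v_i - v_{i+1})`, inserting `x` between `v_i` and `v_{i+1}` divides `1 / Δ_v`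
by `(v_i - x) (x - v_{i+1}) / (v_i - v_{i+1})`, whose inverse has the partial fractions
`1 / (x - v_{i+1}) - 1 / (x - v_i)`. Alternality of `M` for the letter `x` and the word `v` becomes
`∑ M̌(v₁, …, v_i, x, v_{i+1}, …, v_n) (1 / (x - v_{i+1}) - 1 / (x - v_i)) = 0`. Only the two extreme
insertions have a pole at `x = 0`, so the residue there is `M̌(v, 0) - M̌(0, v)`. As both terms are
polynomial in `v`, they agree at every point.
-/

open Filter Topology

lemma insertIdx_append_of_le_length {α : Type*} (x : α) {l : List α} {i : ℕ} (hi : i ≤ l.length)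
    (k : List α) : (l ++ k).insertIdx i x = l.insertIdx i x ++ k := by
  induction l generalizing i with
  | nil => simp_all
  | cons y l ih =>
    cases i with
    | zero => simp
    | succ i => simp [ih (Nat.le_of_succ_le_succ hi)]

section DiffProd

variable {R : Type*} [CommRing R]

/-- The product `(u₁ - u₂) (u₂ - u₃) ⋯ (u_{r-1} - u_r)` of the consecutive differences of a word,
the interior factor of `Δ_v`. It is `1` for words of length at most one. -/
def diffProd (l : List R) : R :=
  (List.zipWith (fun a b => a - b) l l.tail).prod

lemma diffProd_cons_cons (u v : R) (l : List R) :
    diffProd (u :: v :: l) = (u - v) * diffProd (v :: l) := by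
  simp [diffProd]

lemma diffProd_cons_append_singleton (u v : R) (l : List R) :
    diffProd (u :: (l ++ [v])) = diffProd (u :: l) * (l.getLastD u - v) := by
  induction l generalizing u with
  | nil => simp [diffProd]
  | cons w l ih =>
    simp only [List.cons_append, diffProd_cons_cons, ih, List.getLastD_cons, mul_assoc]

lemma diffProd_insertIdx_succ (x : R) {l : List R} {i : ℕ} (hi : i + 1 < l.length) :
    diffProd (l.insertIdx (i + 1) x) * (l[i] - l[i + 1]) =
      (l[i] - x) * (x - l[i + 1]) * diffProd l := by
  induction l generalizing i with
  | nil => simp at hi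
  | cons u l ih =>
    obtain _ | ⟨v, l⟩ := l
    · simp at hi
    cases i with
    | zero =>
      simp only [List.insertIdx_succ_cons, List.insertIdx_zero, diffProd_cons_cons,
        List.getElem_cons_zero, List.getElem_cons_succ]
      ring
    | succ i =>
      have ih := ih (i := i) (by simpa using hi)
      simp only [List.insertIdx_succ_cons, diffProd_cons_cons, List.getElem_cons_succ] at ih ⊢
      linear_combination (u - v) * ih

end DiffProd

section PaddedEntry

variable {R : Type*} [Zero R]

/-- The entry `v_i` of a word `v₁ ⋯ v_r`, extended by `v₀ = 0` and `v_i = 0` for `i > r`, so that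
the factors of `Δ_v` become the differences `v_i - v_{i+1}` for `0 ≤ i ≤ r`. -/
def paddedEntry (w : List R) (i : ℕ) : R :=
  (0 :: w).getD i 0

lemma paddedEntry_eq_zero_iff {w : List R} (hw : 0 ∉ w) (i : ℕ) :
    paddedEntry w i = 0 ↔ i = 0 ∨ w.length < i := by
  cases i with
  | zero => simp [paddedEntry]
  | succ i =>
    rcases lt_or_ge i w.length with hi | hi
    · have hne : w[i] ≠ 0 := fun h => hw (h ▸ List.getElem_mem hi)
      simp [paddedEntry, hi, hne]
    · simp [paddedEntry, hi]

lemma paddedEntry_ne {w : List R} {x : R} (hx : x ≠ 0) (hxw : x ∉ w) (i : ℕ) :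
    paddedEntry w i ≠ x := by
  rintro rfl
  rcases lt_or_ge i (0 :: w).length with hi | hi
  · rw [paddedEntry, List.getD_eq_getElem _ _ hi] at hx hxw
    exact (List.mem_cons.1 (List.getElem_mem hi)).elim hx hxw
  · exact hx (List.getD_eq_default _ _ hi)

lemma getElem_zero_cons_append_zero (w : List R) {i : ℕ} (hi : i < (0 :: (w ++ [0])).length) :
    (0 :: (w ++ [0]))[i] = paddedEntry w i := by
  rw [← List.getD_eq_getElem _ 0 hi, ← List.cons_append, paddedEntry]
  rcases lt_or_ge i (0 :: w).length with hi | hi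
  · rw [List.getD_append _ _ _ _ hi]
  · rw [List.getD_append_right _ _ _ _ hi, List.getD_eq_default _ _ hi]
    cases i - (0 :: w).length <;> simp

end PaddedEntry

section Residue

variable {K : Type*} [Field K] [TopologicalSpace K] [IsTopologicalDivisionRing K]

lemma tendsto_mul_inv_sub_nhdsNE_zero [DecidableEq K] (a : K) :
    Tendsto (fun x => x * (x - a)⁻¹) (𝓝[≠] 0) (𝓝 (if a = 0 then 1 else 0)) := by
  split_ifs with ha
  · refine tendsto_const_nhds.congr' ?_
    filter_upwards [self_mem_nhdsWithin] with x hx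
    rw [ha, sub_zero, mul_inv_cancel₀ hx]
  · have hcont : ContinuousAt (fun x : K => x * (x - a)⁻¹) 0 :=
      continuousAt_id.mul ((continuousAt_id.sub continuousAt_const).inv₀ (by simpa using ha))
    simpa using hcont.tendsto.mono_left nhdsWithin_le_nhds

lemma eq_of_eventually_sum_mul_inv_sub_inv_eq_zero [T2Space K] [(𝓝[≠] (0 : K)).NeBot] {n : ℕ}
    {a : ℕ → K} {f : ℕ → K → K} (ha : ∀ i ≤ n + 1, a i = 0 ↔ i = 0 ∨ i = n + 1)
    (hf : ∀ i ≤ n, ContinuousAt (f i) 0)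
    (h : ∀ᶠ x in 𝓝[≠] 0,
      ∑ i ∈ Finset.range (n + 1), f i x * ((x - a (i + 1))⁻¹ - (x - a i)⁻¹) = 0) :
    f n 0 = f 0 0 := by
  classical
  -- The residue at `0` of `(x - a (i + 1))⁻¹ - (x - a i)⁻¹`.
  let c (i : ℕ) : K := (if a (i + 1) = 0 then 1 else 0) - if a i = 0 then 1 else 0
  have hlim : Tendsto
      (fun x => ∑ i ∈ Finset.range (n + 1), f i x * (x * (x - a (i + 1))⁻¹ - x * (x - a i)⁻¹))
      (𝓝[≠] 0) (𝓝 (∑ i ∈ Finset.range (n + 1), f i 0 * c i)) :=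
    tendsto_finsetSum _ fun i hi =>
      ((hf i (Finset.mem_range_succ_iff.1 hi)).tendsto.mono_left nhdsWithin_le_nhds).mul
        ((tendsto_mul_inv_sub_nhdsNE_zero _).sub (tendsto_mul_inv_sub_nhdsNE_zero _))
  have hzero : ∑ i ∈ Finset.range (n + 1), f i 0 * c i = 0 := by
    refine tendsto_nhds_unique_of_eventuallyEq hlim tendsto_const_nhds ?_
    filter_upwards [h] with x hx
    simp_rw [← mul_sub, mul_left_comm _ x, ← Finset.mul_sum, hx, mul_zero]
  have hc : ∀ i ∈ Finset.range (n + 1), f i 0 * c i =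
      (if i = n then f i 0 else 0) - if i = 0 then f i 0 else 0 := by
    intro i hi
    have hi := Finset.mem_range_succ_iff.1 hi
    have hfirst : a i = 0 ↔ i = 0 := (ha i (by omega)).trans (by omega)
    have hlast : a (i + 1) = 0 ↔ i = n := (ha (i + 1) (by omega)).trans (by omega)
    simp only [c, hfirst, hlast, mul_sub, mul_ite, mul_one, mul_zero]
  rw [Finset.sum_congr rfl hc, Finset.sum_sub_distrib] at hzero
  simpa [sub_eq_zero] using hzero

end Residue

lemma map_aeval_list_get {R A B : Type*} [CommSemiring R] [CommSemiring A] [CommSemiring B]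
    [Algebra R A] [Algebra R B] (φ : A →ₐ[R] B) (p : (r : ℕ) → MvPolynomial (Fin r) R)
    (l : List A) :
    φ (MvPolynomial.aeval l.get (p l.length)) =
      MvPolynomial.aeval (l.map φ).get (p (l.map φ).length) := by
  -- The two lengths are equal only propositionally, so the index type is generalized to `Fin m`.
  have hcast : ∀ {m : ℕ} (hm : m = l.length),
      φ (MvPolynomial.aeval l.get (p l.length)) =
        MvPolynomial.aeval (fun i => φ (l.get (Fin.cast hm i))) (p m) := by
    rintro _ rfl
    exact DFunLike.congr_fun (MvPolynomial.comp_aeval l.get φ) (p l.length)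
  rw [hcast (List.length_map φ)]
  congr 2
  ext i
  simp

lemma mvPolynomial_eq_of_forall_eval_ne_zero {R σ : Type*} [CommRing R] [IsDomain R] [Infinite R]
    {d p q : MvPolynomial σ R} (hd : d ≠ 0)
    (h : ∀ v, MvPolynomial.eval v d ≠ 0 → MvPolynomial.eval v p = MvPolynomial.eval v q) :
    p = q := by
  refine mul_left_cancel₀ hd (MvPolynomial.funext fun v => ?_)
  rw [map_mul, map_mul, mul_eq_mul_left_iff, or_iff_not_imp_right]
  exact h v

lemma mvPolynomial_eq_of_forall_injective_cons_zero {R : Type*} [CommRing R] [IsDomain R]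
    [Infinite R] {n : ℕ} {p q : MvPolynomial (Fin n) R}
    (h : ∀ v : Fin n → R, Function.Injective (Fin.cons 0 v : Fin (n + 1) → R) →
      MvPolynomial.eval v p = MvPolynomial.eval v q) : p = q := by
  -- The Vandermonde determinant of `(0, X₁, …, X_n)` evaluates to a nonzero value at `v`
  -- exactly when `(0, v)` is injective.
  let x : Fin (n + 1) → MvPolynomial (Fin n) R := Fin.cons 0 MvPolynomial.X
  have hx : Function.Injective x :=
    Fin.cons_injective_iff.2 ⟨fun ⟨i, hi⟩ => MvPolynomial.X_ne_zero i hi, MvPolynomial.X_injective⟩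
  refine mvPolynomial_eq_of_forall_eval_ne_zero (Matrix.det_vandermonde_ne_zero_iff.2 hx)
    fun v hv => h v ?_
  have hmap : (MvPolynomial.eval v).mapMatrix (Matrix.vandermonde x) =
      Matrix.vandermonde (Fin.cons 0 v) := by
    ext i j
    rw [RingHom.mapMatrix_apply, Matrix.map_apply, Matrix.vandermonde_apply,
      Matrix.vandermonde_apply, map_pow]
    cases i using Fin.cases <;> simp [x]
  rwa [RingHom.map_det, hmap, Matrix.det_vandermonde_ne_zero_iff] at hv

lemma deltaV_eq_neg_diffProd {w : List ℚ} (hw : w ≠ []) :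
    deltaV w = -diffProd (0 :: (w ++ [0])) := by
  obtain ⟨u, l, rfl⟩ := List.exists_cons_of_ne_nil hw
  rw [List.cons_append, diffProd_cons_cons, diffProd_cons_append_singleton]
  simp only [deltaV, diffProd, List.headD_cons, List.getLastD_cons]
  ring

lemma deltaV_insertIdx (x : ℚ) {w : List ℚ} (hw : w ≠ []) {i : ℕ} (hi : i ≤ w.length) :
    deltaV (w.insertIdx i x) * (paddedEntry w i - paddedEntry w (i + 1)) =
      (paddedEntry w i - x) * (x - paddedEntry w (i + 1)) * deltaV w := by
  have hlen : i + 1 < (0 :: (w ++ [0])).length := by simpa using Nat.lt_succ_of_le hi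
  have hins : w.insertIdx i x ≠ [] := by
    simp [← List.length_pos_iff, List.length_insertIdx_of_le_length hi]
  have hpad : 0 :: (w.insertIdx i x ++ [0]) = (0 :: (w ++ [0])).insertIdx (i + 1) x := by
    rw [List.insertIdx_succ_cons, insertIdx_append_of_le_length x hi]
  have key := diffProd_insertIdx_succ x hlen
  rw [getElem_zero_cons_append_zero, getElem_zero_cons_append_zero, ← hpad] at key
  rw [deltaV_eq_neg_diffProd hw, deltaV_eq_neg_diffProd hins]
  linear_combination -key

lemma sum_map_shuffles_singleton (M : Mould) (x : ℚ) (w : List ℚ) :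
    ((shuffles [x] w).map M).sum = ∑ i ∈ Finset.range (w.length + 1), M (w.insertIdx i x) := by
  induction w generalizing M with
  | nil => simp [shuffles]
  | cons y w ih =>
    rw [List.length_cons, Finset.sum_range_succ']
    simpa [shuffles, add_comm, Function.comp_def] using ih fun v => M (y :: v)

lemma GoodV.perm {v w : List ℚ} (hv : GoodV v) (h : v.Perm w) : GoodV w :=
  ⟨h.nodup_iff.1 hv.1, fun h' => hv.2 (h.mem_iff.2 h')⟩

lemma eventually_goodV_cons {w : List ℚ} (hw : GoodV w) :
    ∀ᶠ x in 𝓝[≠] (0 : ℚ), GoodV (x :: w) := by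
  have hx : ∀ᶠ x in 𝓝[≠] (0 : ℚ), x ∉ w :=
    nhdsNE_le_cofinite 0 (List.finite_toSet w).compl_mem_cofinite
  filter_upwards [hx, self_mem_nhdsWithin] with x hxw hx0
  exact ⟨List.nodup_cons.2 ⟨hxw, hw.1⟩, by simpa [hw.2, eq_comm] using hx0⟩

lemma continuous_evalP_insertIdx (p : (r : ℕ) → MvPolynomial (Fin r) ℚ) (w : List ℚ) (i : ℕ) :
    Continuous fun x => evalP p (w.insertIdx i x) := by
  let l := (w.map Polynomial.C).insertIdx i Polynomial.X
  have hl (x : ℚ) : l.map (Polynomial.aeval x) = w.insertIdx i x := by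
    simp [l, List.map_insertIdx, Function.comp_def]
  refine (MvPolynomial.aeval l.get (p l.length)).continuous_aeval.congr fun x => ?_
  rw [map_aeval_list_get, hl, evalP]

section Alternal

variable {M : Mould} {p : (r : ℕ) → MvPolynomial (Fin r) ℚ}

lemma deltaV_mul_mould_insertIdx
    (hrat : ∀ w : List ℚ, GoodV w → deltaV w * M w = evalP p w) {x : ℚ} {w : List ℚ}
    (hw : w ≠ []) (hgood : GoodV (x :: w)) {i : ℕ} (hi : i ≤ w.length) :
    deltaV w * M (w.insertIdx i x) =
      evalP p (w.insertIdx i x) * ((x - paddedEntry w (i + 1))⁻¹ - (x - paddedEntry w i)⁻¹) := by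
  have hx : x ≠ 0 := by rintro rfl; exact hgood.2 List.mem_cons_self
  have hne (j : ℕ) : x - paddedEntry w j ≠ 0 :=
    sub_ne_zero.2 (paddedEntry_ne hx (List.nodup_cons.1 hgood.1).1 j).symm
  rw [inv_sub_inv (hne _) (hne _), mul_div_assoc', eq_div_iff (mul_ne_zero (hne _) (hne _)),
    ← hrat _ (hgood.perm (List.perm_insertIdx x w hi).symm)]
  linear_combination M (w.insertIdx i x) * deltaV_insertIdx x hw hi

lemma sum_evalP_insertIdx_mul_eq_zero
    (hrat : ∀ w : List ℚ, GoodV w → deltaV w * M w = evalP p w) {x : ℚ} {w : List ℚ}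
    (hw : w ≠ []) (hgood : GoodV (x :: w)) (hal : ((shuffles [x] w).map M).sum = 0) :
    ∑ i ∈ Finset.range (w.length + 1), evalP p (w.insertIdx i x) *
      ((x - paddedEntry w (i + 1))⁻¹ - (x - paddedEntry w i)⁻¹) = 0 := by
  calc
    _ = ∑ i ∈ Finset.range (w.length + 1), deltaV w * M (w.insertIdx i x) :=
      Finset.sum_congr rfl fun i hi =>
        (deltaV_mul_mould_insertIdx hrat hw hgood (Finset.mem_range_succ_iff.1 hi)).symm
    _ = 0 := by rw [← Finset.mul_sum, ← sum_map_shuffles_singleton, hal, mul_zero]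

lemma evalP_zero_cons_of_goodV
    (hrat : ∀ w : List ℚ, GoodV w → deltaV w * M w = evalP p w)
    {w : List ℚ} (hw : w ≠ []) (hgood : GoodV w)
    (hal : ∀ x : ℚ, GoodV (x :: w) → ((shuffles [x] w).map M).sum = 0) :
    evalP p (0 :: w) = evalP p (w ++ [0]) := by
  have hsum : ∀ᶠ x in 𝓝[≠] (0 : ℚ), ∑ i ∈ Finset.range (w.length + 1),
      evalP p (w.insertIdx i x) *
        ((x - paddedEntry w (i + 1))⁻¹ - (x - paddedEntry w i)⁻¹) = 0 := by
    filter_upwards [eventually_goodV_cons hgood] with x hx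
    exact sum_evalP_insertIdx_mul_eq_zero hrat hw hx (hal x hx)
  have hres := eq_of_eventually_sum_mul_inv_sub_inv_eq_zero
    (fun i hi => (paddedEntry_eq_zero_iff hgood.2 i).trans (by omega))
    (fun i _ => (continuous_evalP_insertIdx p w i).continuousAt) hsum
  simpa using hres.symm

end Alternal

lemma goodV_ofFn_iff {n : ℕ} {v : Fin n → ℚ} :
    GoodV (List.ofFn v) ↔ Function.Injective (Fin.cons 0 v : Fin (n + 1) → ℚ) := by
  rw [GoodV, List.nodup_ofFn, List.mem_ofFn, Fin.cons_injective_iff, and_comm, Set.mem_range]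

lemma evalP_map_eq_of_forall_goodV {p : (r : ℕ) → MvPolynomial (Fin r) ℚ} {n : ℕ}
    {l k : List (MvPolynomial (Fin n) ℚ)}
    (h : ∀ v : Fin n → ℚ, GoodV (List.ofFn v) →
      evalP p (l.map (MvPolynomial.eval v)) = evalP p (k.map (MvPolynomial.eval v)))
    (v : Fin n → ℚ) :
    evalP p (l.map (MvPolynomial.eval v)) = evalP p (k.map (MvPolynomial.eval v)) := by
  have hmap (m : List (MvPolynomial (Fin n) ℚ)) (v : Fin n → ℚ) :
      evalP p (m.map (MvPolynomial.eval v)) =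
        MvPolynomial.eval v (MvPolynomial.aeval m.get (p m.length)) :=
    (map_aeval_list_get (MvPolynomial.aeval v) p m).symm
  simp only [hmap] at h ⊢
  exact congrArg (MvPolynomial.eval v) (mvPolynomial_eq_of_forall_injective_cons_zero
    fun v hv => h v (goodV_ofFn_iff.2 hv))

theorem check_mould_boundary_symmetry_general {M : Mould} {p : (r : ℕ) → MvPolynomial (Fin r) ℚ}
    (hrat : ∀ w : List ℚ, GoodV w → deltaV w * M w = evalP p w)
    (hal : ∀ (x : ℚ) (w : List ℚ), w ≠ [] → GoodV (x :: w) → ((shuffles [x] w).map M).sum = 0)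
    {w : List ℚ} (hw : w ≠ []) :
    evalP p (0 :: w) = evalP p (w ++ [0]) := by
  let l : List (MvPolynomial (Fin w.length) ℚ) := List.ofFn MvPolynomial.X
  have hl (v : Fin w.length → ℚ) : l.map (MvPolynomial.eval v) = List.ofFn v := by
    simp [l, List.map_ofFn, Function.comp_def]
  have h (v : Fin w.length → ℚ) (hv : GoodV (List.ofFn v)) :
      evalP p ((0 :: l).map (MvPolynomial.eval v)) =
        evalP p ((l ++ [0]).map (MvPolynomial.eval v)) := by
    have hne : List.ofFn v ≠ [] := by simpa [List.ofFn_eq_nil_iff] using hw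
    simpa [hl] using evalP_zero_cons_of_goodV hrat hne hv fun x => hal x _ hne
  simpa [hl] using evalP_map_eq_of_forall_goodV h w.get

/-- Let M be an alternal rational-function-valued mould such that M̌ = Δ_v·M is
polynomial-valued (with polynomial family p) in every depth.  Then
M̌(0, v₂, …, v_r) = M̌(v₂, …, v_r, 0) for every r ≥ 2. -/
theorem check_mould_boundary_symmetry (M : Mould) (p : (r : ℕ) → MvPolynomial (Fin r) ℚ)
    (h0 : M [] = 0)
    (hrat : ∀ w : List ℚ, GoodV w → deltaV w * M w = evalP p w)
    (hal : ∀ w₁ w₂ : List ℚ, w₁ ≠ [] → w₂ ≠ [] → GoodV (w₁ ++ w₂) →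
      ((shuffles w₁ w₂).map M).sum = 0)
    (w : List ℚ) (hw : w ≠ []) :
    evalP p (0 :: w) = evalP p (w ++ [0]) :=
  check_mould_boundary_symmetry_general hrat
    (fun x v hv => hal [x] v (List.cons_ne_nil x []) hv) hw
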